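/- Let (E,d_E) be a finite metric space, let p ≥ 1, let r, n ∈ ℕ, let y₁,…,y_{2r} ∈ E be distinct points and let z₁,…,z_r ∈ E. Let μ = (1/(2r))∑_{i=1}^{2r} δ_{y_i} and μ̃ = (1/r)∑_{i=1}^{r} δ_{z_i}, and let μ_n and μ̃_n be empirical measures of μ and μ̃, respectively, with sample size n. Then ‖W_p^$(μ_n, μ)‖_{L^p} ≤ ‖W_p^$(μ̃_n, μ̃)‖_{L^p} + 2^{1 − 1/p} · (2r/n)^{1/(2p)} · W_p(μ, μ̃), where for a random variable W, ‖W‖_{L^p} = (𝔼|W|^p)^{1/p}. -/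

import Mathlib

open MeasureTheory ENNReal Filter

noncomputable section

/-- The `p`-Wasserstein distance between two measures on a metric space, as an
extended nonnegative real: the infimum over all couplings `γ` (measures on `E × E`
with the prescribed marginals) of `(∫ d(x,y)^p dγ)^(1/p)`. -/
def Wp {E : Type*} [MetricSpace E] [MeasurableSpace E] (p : ℝ) (μ ν : Measure E) : ℝ≥0∞ :=
  ⨅ γ ∈ {γ : Measure (E × E) | γ.map Prod.fst = μ ∧ γ.map Prod.snd = ν},
    (∫⁻ z, edist z.1 z.2 ^ p ∂γ) ^ (1 / p)

/-- The (uniform) discrete measure `(1/n) ∑ δ_{X i}`. -/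
def empiricalMeasure {E : Type*} [MeasurableSpace E] (n : ℕ) (X : Fin n → E) : Measure E :=
  (n : ℝ≥0∞)⁻¹ • ∑ i, Measure.dirac (X i)

/-- The law of `n` independent samples of `μ`. -/
def sampleMeasure {E : Type*} [MeasurableSpace E] (μ : Measure E) (n : ℕ) :
    Measure (Fin n → E) :=
  Measure.pi fun _ => μ

/-- `𝔼[W_p(μ_n, μ)]`, where `μ_n` is the empirical measure of `μ` with sample size `n`. -/
def expWp {E : Type*} [MetricSpace E] [MeasurableSpace E] (p : ℝ) (μ : Measure E) (n : ℕ) :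
    ℝ≥0∞ :=
  ∫⁻ X, Wp p (empiricalMeasure n X) μ ∂(sampleMeasure μ n)

/-- `(𝔼[W_p(μ_n, μ)^p])^{1/p}`, where `μ_n` is the empirical measure of `μ` with
sample size `n`. -/
def expWpPow {E : Type*} [MetricSpace E] [MeasurableSpace E] (p : ℝ) (μ : Measure E) (n : ℕ) :
    ℝ≥0∞ :=
  (∫⁻ X, (Wp p (empiricalMeasure n X) μ) ^ p ∂(sampleMeasure μ n)) ^ (1 / p)

/-- The optimal uniform quantization error
`b_{n,p}(μ) = inf_{x₁,…,x_n} W_p(μ, (1/n) ∑ δ_{x_i})`. -/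
def unifQuantErr {E : Type*} [MetricSpace E] [MeasurableSpace E] (p : ℝ) (n : ℕ)
    (μ : Measure E) : ℝ≥0∞ :=
  ⨅ x : Fin n → E, Wp p μ (empiricalMeasure n x)

/-- The optimal quantization error `e_{n,p}(μ)`: the infimum of `W_p(μ, ν)` over all
probability measures `ν` supported on at most `n` points. -/
def quantErr {E : Type*} [MetricSpace E] [MeasurableSpace E] (p : ℝ) (n : ℕ)
    (μ : Measure E) : ℝ≥0∞ :=
  ⨅ ν ∈ {ν : Measure E | IsProbabilityMeasure ν ∧
      ∃ S : Finset E, S.card ≤ n ∧ ν (↑S : Set E)ᶜ = 0}, Wp p μ ν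

/-- `μ` has a finite `p`-th moment: `∫ d(x, x₀)^p dμ(x) < ∞` for some `x₀`. -/
def HasFiniteMoment {E : Type*} [MetricSpace E] [MeasurableSpace E] (p : ℝ)
    (μ : Measure E) : Prop :=
  ∃ x₀ : E, ∫⁻ x, edist x x₀ ^ p ∂μ ≠ ∞

end

/-- The measure `μ∧ν` on a finite space, with `(μ∧ν)({x}) = min(μ({x}), ν({x}))`. -/
noncomputable def measInf {E : Type*} [Fintype E] [MeasurableSpace E]
    (μ ν : Measure E) : Measure E :=
  ∑ x : E, min (μ {x}) (ν {x}) • Measure.dirac x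

/-- `W_p^$(μ,ν)`: equal to `0` when `μ = ν`, and otherwise to
`(1 − (μ∧ν)(E))^{1/p} W_p((μ − μ∧ν)/(1 − (μ∧ν)(E)), (ν − μ∧ν)/(1 − (μ∧ν)(E)))`. -/
noncomputable def WpDollar {E : Type*} [MetricSpace E] [Fintype E] [MeasurableSpace E]
    (p : ℝ) (μ ν : Measure E) : ℝ≥0∞ :=
  if μ = ν then 0
  else
    (1 - measInf μ ν Set.univ) ^ (1 / p) *
      Wp p ((1 - measInf μ ν Set.univ)⁻¹ • (μ - measInf μ ν))
        ((1 - measInf μ ν Set.univ)⁻¹ • (ν - measInf μ ν))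

/-!
A coupling of the parts `(μ̃_n - μ̃)⁺` and `(μ̃_n - μ̃)⁻` can be pulled back along an optimal
transport map `T` from `μ` to `μ̃`: the mass of `μ_n - μ` that cancels after applying `T` is put on
the diagonal, and the result lifts to a coupling of `(μ_n - μ)⁺` and `(μ_n - μ)⁻`. By Minkowski's
inequality this costs at most `(2^{p-1} ∫ d(x, T x)^p d|μ_n - μ|)^{1/p}`. Every atom of `μ` has
mass at least `1/(2r)`, so `𝔼|μ_n{x} - μ{x}| ≤ √(μ{x}/n) ≤ √(2r/n) μ{x}`. Finally, `μ̃` is also the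
uniform measure on a list of `2r` points, so by Birkhoff's theorem an optimal `T` exists.
-/

open ProbabilityTheory
open scoped NNReal

section MeasureSub

variable {α : Type*} [MeasurableSpace α]

theorem measure_sub_add_eq_sub_add (μ ν : Measure α) [IsFiniteMeasure μ] [IsFiniteMeasure ν] :
    μ - ν + ν = ν - μ + μ := by
  have h := Measure.sub_toSignedMeasure_eq_toSignedMeasure_sub (μ := μ) (ν := ν)
  rw [sub_eq_sub_iff_add_eq_add] at h
  rw [← Measure.toSignedMeasure_eq_toSignedMeasure_iff, Measure.toSignedMeasure_add,
    Measure.toSignedMeasure_add, ← h, add_comm]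

theorem exists_eq_measure_sub_add {μ ν ρ σ : Measure α} [IsFiniteMeasure μ] [IsFiniteMeasure ν]
    (h : ρ + ν = σ + μ) : ∃ δ, ρ = μ - ν + δ ∧ σ = ν - μ + δ := by
  have hle : μ - ν ≤ ρ := Measure.sub_le_of_le_add (h ▸ Measure.le_add_left le_rfl)
  have hρ : ρ = μ - ν + (ρ - (μ - ν)) := by rw [add_comm, Measure.sub_add_cancel_of_le hle]
  refine ⟨ρ - (μ - ν), hρ, (Measure.add_left_inj μ _ _).1 ?_⟩
  rw [← h, add_right_comm, ← measure_sub_add_eq_sub_add, add_right_comm, ← hρ]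

theorem measure_sub_apply_singleton [MeasurableSingletonClass α] (μ ν : Measure α)
    [IsFiniteMeasure ν] (x : α) : (μ - ν) {x} = μ {x} - ν {x} := by
  have hx := measurableSet_singleton x
  rcases le_total (μ {x}) (ν {x}) with h | h
  · rw [tsub_eq_zero_of_le h]
    refine Measure.sub_apply_eq_zero_of_restrict_le_restrict ?_ hx
    rw [Measure.restrict_singleton, Measure.restrict_singleton]
    gcongr
  · have hle : ν.restrict {x} ≤ μ.restrict {x} := by
      rw [Measure.restrict_singleton, Measure.restrict_singleton]
      gcongr
    rw [← Measure.restrict_apply_self, Measure.restrict_sub_eq_restrict_sub_restrict hx,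
      Measure.sub_apply hx hle, Measure.restrict_apply_self, Measure.restrict_apply_self]

end MeasureSub

section LiftCoupling

variable {A B C D : Type*} [MeasurableSpace A] [MeasurableSpace B] [MeasurableSpace C]
  [MeasurableSpace D]

theorem exists_map_prodMap_id_eq [StandardBorelSpace A] [Nonempty A] [MeasurableEq B]
    {T : A → B} (hT : Measurable T) {α : Measure A} [IsFiniteMeasure α] {κ : Measure (B × D)}
    (hκ : κ.map Prod.fst = α.map T) :
    ∃ γ : Measure (A × D), γ.map Prod.fst = α ∧ γ.map (Prod.map T id) = κ := by
  have hκα : IsFiniteMeasure (κ.map Prod.fst) := hκ ▸ inferInstance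
  have : IsFiniteMeasure κ := Measure.isFiniteMeasure_of_map measurable_fst.aemeasurable
  -- `ρ` glues `κ` to the conditional law of `x` given `T x` under `α`.
  let K := condDistrib id T α
  let ρ : Measure ((B × D) × A) := κ ⊗ₘ K.comap Prod.fst measurable_fst
  have hρκ : ρ.map Prod.fst = κ := Measure.fst_compProd κ _
  have hρα : ρ.map (fun q => (q.1.1, q.2)) = α.map fun x => (T x, x) := by
    refine Eq.trans ?_ (compProd_map_condDistrib (μ := α) (X := T) (Y := id) aemeasurable_id)
    rw [← hκ]
    refine Measure.ext_of_lintegral _ fun f hf => ?_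
    rw [lintegral_map hf (by fun_prop), Measure.lintegral_compProd (by fun_prop),
      Measure.lintegral_compProd hf, lintegral_map (by fun_prop) measurable_fst]
    rfl
  have hgraph : ∀ᵐ q ∂ρ, T q.2 = q.1.1 := by
    have hmeas : MeasurableSet {q : B × A | T q.2 = q.1} :=
      measurableSet_eq_fun (by fun_prop) (by fun_prop)
    refine ae_of_ae_map (f := fun q : (B × D) × A => (q.1.1, q.2))
      (p := fun q => T q.2 = q.1) (by fun_prop) ?_
    rw [hρα, ae_map_iff (by fun_prop) hmeas]
    simp
  refine ⟨ρ.map fun q => (q.2, q.1.2), ?_, ?_⟩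
  · rw [Measure.map_map (by fun_prop) (by fun_prop)]
    calc ρ.map Prod.snd = (ρ.map fun q => (q.1.1, q.2)).map Prod.snd := by
          rw [Measure.map_map (by fun_prop) (by fun_prop)]; rfl
      _ = α := by
          rw [hρα, Measure.map_map (by fun_prop) (by fun_prop)]; exact Measure.map_id
  · rw [Measure.map_map (by fun_prop) (by fun_prop), ← hρκ]
    refine Measure.map_congr (hgraph.mono fun q hq => ?_)
    simp [hq]

theorem exists_map_prodMap_eq [StandardBorelSpace A] [Nonempty A] [MeasurableEq B]
    [StandardBorelSpace C] [Nonempty C] [MeasurableEq D] {S : A → B} {T : C → D}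
    (hS : Measurable S) (hT : Measurable T) {α : Measure A} {β : Measure C} [IsFiniteMeasure α]
    [IsFiniteMeasure β] {κ : Measure (B × D)} (hα : κ.map Prod.fst = α.map S)
    (hβ : κ.map Prod.snd = β.map T) :
    ∃ γ : Measure (A × C), γ.map Prod.fst = α ∧ γ.map Prod.snd = β ∧
      γ.map (Prod.map S T) = κ := by
  obtain ⟨σ, hσα, hσκ⟩ := exists_map_prodMap_id_eq hS hα
  have hσβ : (σ.map Prod.swap).map Prod.fst = β.map T := by
    rw [← hβ, ← hσκ, Measure.map_map (by fun_prop) (by fun_prop),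
      Measure.map_map (by fun_prop) (by fun_prop)]
    rfl
  obtain ⟨τ, hτβ, hτσ⟩ := exists_map_prodMap_id_eq hT hσβ
  have hτ : (τ.map Prod.swap).map (Prod.map id T) = σ := by
    calc (τ.map Prod.swap).map (Prod.map id T) = (τ.map (Prod.map T id)).map Prod.swap := by
          rw [Measure.map_map (by fun_prop) (by fun_prop),
            Measure.map_map (by fun_prop) (by fun_prop)]
          rfl
      _ = σ := by
          rw [hτσ, Measure.map_map (by fun_prop) (by fun_prop), Prod.swap_swap_eq, Measure.map_id]
  refine ⟨τ.map Prod.swap, ?_, ?_, ?_⟩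
  · rw [← hσα, ← hτ, Measure.map_map (by fun_prop) (by fun_prop),
      Measure.map_map (by fun_prop) (by fun_prop), Measure.map_map (by fun_prop) (by fun_prop)]
    rfl
  · rw [Measure.map_map (by fun_prop) (by fun_prop), ← hτβ]
    rfl
  · rw [← hσκ, ← hτ, Measure.map_map (by fun_prop) (by fun_prop),
      Measure.map_map (by fun_prop) (by fun_prop), Measure.map_map (by fun_prop) (by fun_prop)]
    rfl

end LiftCoupling

section MeasInf

variable {E : Type*} [Fintype E] [MeasurableSpace E]

theorem measInf_comm (μ ν : Measure E) : measInf μ ν = measInf ν μ := by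
  simp only [measInf, min_comm]

variable [MeasurableSingletonClass E]

theorem measInf_apply_singleton (μ ν : Measure E) (x : E) :
    measInf μ ν {x} = min (μ {x}) (ν {x}) := by
  classical
  simp [measInf, Set.indicator_apply]

theorem measure_sub_add_measInf (μ ν : Measure E) [IsFiniteMeasure ν] :
    μ - ν + measInf μ ν = μ := by
  refine Measure.ext_of_singleton fun x => ?_
  rw [Measure.add_apply, measure_sub_apply_singleton, measInf_apply_singleton, tsub_add_min]

theorem measInf_le_left (μ ν : Measure E) [IsFiniteMeasure ν] : measInf μ ν ≤ μ :=
  calc measInf μ ν ≤ μ - ν + measInf μ ν := Measure.le_add_left le_rfl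
    _ = μ := measure_sub_add_measInf μ ν

theorem measInf_le_right (μ ν : Measure E) [IsFiniteMeasure μ] : measInf μ ν ≤ ν :=
  measInf_comm μ ν ▸ measInf_le_left ν μ

theorem measure_sub_measInf (μ ν : Measure E) [IsFiniteMeasure μ] [IsFiniteMeasure ν] :
    μ - measInf μ ν = μ - ν := by
  have : IsFiniteMeasure (measInf μ ν) := isFiniteMeasure_of_le μ (measInf_le_left μ ν)
  calc μ - measInf μ ν = μ - ν + measInf μ ν - measInf μ ν := by rw [measure_sub_add_measInf]
    _ = μ - ν := Measure.add_sub_cancel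

theorem measInf_univ_lt_one {μ ν : Measure E} [IsProbabilityMeasure μ] [IsProbabilityMeasure ν]
    (h : μ ≠ ν) : measInf μ ν Set.univ < 1 := by
  have hle := measInf_le_left μ ν
  have : IsFiniteMeasure (measInf μ ν) := isFiniteMeasure_of_le μ hle
  refine lt_of_not_ge fun hge => h ?_
  have hμ : measInf μ ν = μ := Measure.eq_of_le_of_measure_univ_eq hle
    (le_antisymm (hle _) (measure_univ.trans_le hge))
  exact Measure.eq_of_le_of_isProbabilityMeasure (hμ.symm.trans_le (measInf_le_right μ ν))

end MeasInf

section Wasserstein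

variable {E : Type*} [MetricSpace E] [MeasurableSpace E] {p : ℝ}

theorem Wp_le_lintegral (p : ℝ) (γ : Measure (E × E)) :
    Wp p (γ.map Prod.fst) (γ.map Prod.snd) ≤ (∫⁻ z, edist z.1 z.2 ^ p ∂γ) ^ (1 / p) :=
  iInf₂_le γ ⟨rfl, rfl⟩

theorem Wp_zero (hp : 0 < p) : Wp p (0 : Measure E) 0 = 0 := by
  simpa [hp] using Wp_le_lintegral p (0 : Measure (E × E))

theorem Wp_smul_le (hp : 0 ≤ p) {c : ℝ≥0∞} (hc₀ : c ≠ 0) (hc : c ≠ ∞) (μ ν : Measure E) :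
    Wp p (c • μ) (c • ν) ≤ c ^ (1 / p) * Wp p μ ν := by
  have hp' : 0 ≤ 1 / p := one_div_nonneg.2 hp
  have hcp₀ : c ^ (1 / p) ≠ 0 := (ENNReal.rpow_pos (pos_iff_ne_zero.2 hc₀) hc).ne'
  have hcp : c ^ (1 / p) ≠ ∞ := ENNReal.rpow_ne_top_of_nonneg hp' hc
  simp only [Wp, ENNReal.mul_iInf_of_ne hcp₀ hcp]
  refine le_iInf₂ fun γ hγ => iInf₂_le_of_le (c • γ) ?_ ?_
  · simp [Measure.map_smul, hγ.1, hγ.2]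
  · rw [lintegral_smul_measure, smul_eq_mul, ENNReal.mul_rpow_of_nonneg _ _ hp']

theorem Wp_smul (hp : 0 ≤ p) {c : ℝ≥0∞} (hc₀ : c ≠ 0) (hc : c ≠ ∞) (μ ν : Measure E) :
    Wp p (c • μ) (c • ν) = c ^ (1 / p) * Wp p μ ν := by
  refine le_antisymm (Wp_smul_le hp hc₀ hc μ ν) ?_
  calc c ^ (1 / p) * Wp p μ ν = c ^ (1 / p) * Wp p (c⁻¹ • c • μ) (c⁻¹ • c • ν) := by
        simp only [smul_smul, ENNReal.inv_mul_cancel hc₀ hc, one_smul]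
    _ ≤ c ^ (1 / p) * (c⁻¹ ^ (1 / p) * Wp p (c • μ) (c • ν)) := by
        gcongr
        exact Wp_smul_le hp (ENNReal.inv_ne_zero.2 hc) (ENNReal.inv_ne_top.2 hc₀) _ _
    _ = Wp p (c • μ) (c • ν) := by
        rw [← mul_assoc, ← ENNReal.mul_rpow_of_nonneg _ _ (one_div_nonneg.2 hp),
          ENNReal.mul_inv_cancel hc₀ hc, ENNReal.one_rpow, one_mul]

theorem WpDollar_eq_Wp_sub [Fintype E] [MeasurableSingletonClass E] (hp : 0 < p)
    (μ ν : Measure E) [IsProbabilityMeasure μ] [IsProbabilityMeasure ν] :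
    WpDollar p μ ν = Wp p (μ - ν) (ν - μ) := by
  rw [WpDollar, measure_sub_measInf μ ν, measInf_comm, measure_sub_measInf ν μ]
  split_ifs with h
  · rw [h, Measure.sub_self, Wp_zero hp]
  · have hm : 1 - measInf ν μ Set.univ ≠ 0 :=
      (tsub_pos_of_lt (measInf_univ_lt_one (Ne.symm h))).ne'
    have hm' : 1 - measInf ν μ Set.univ ≠ ∞ := ENNReal.sub_ne_top ENNReal.one_ne_top
    rw [Wp_smul hp.le (ENNReal.inv_ne_zero.2 hm') (ENNReal.inv_ne_top.2 hm), ← mul_assoc,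
      ← ENNReal.mul_rpow_of_nonneg _ _ (one_div_nonneg.2 hp.le), ENNReal.mul_inv_cancel hm hm',
      ENNReal.one_rpow, one_mul]

theorem lintegral_edist_rpow_le_map [OpensMeasurableSpace E] [SecondCountableTopology E]
    (hp : 1 ≤ p) {T : E → E} (hT : Measurable T) (γ : Measure (E × E)) :
    (∫⁻ z, edist z.1 z.2 ^ p ∂γ) ^ (1 / p) ≤
      (∫⁻ z, edist z.1 z.2 ^ p ∂γ.map (Prod.map T T)) ^ (1 / p) +
        (2 ^ (p - 1) * ∫⁻ x, edist x (T x) ^ p ∂(γ.map Prod.fst + γ.map Prod.snd)) ^ (1 / p) := by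
  have htri (z : E × E) : edist z.1 z.2 ≤
      edist (T z.1) (T z.2) + (edist z.1 (T z.1) + edist z.2 (T z.2)) := by
    calc edist z.1 z.2 ≤ _ := edist_triangle4 _ (T z.1) (T z.2) _
      _ = _ := by rw [edist_comm (T z.2)]; ring
  have hdev : ∫⁻ z, (edist z.1 (T z.1) + edist z.2 (T z.2)) ^ p ∂γ ≤
      2 ^ (p - 1) * ∫⁻ x, edist x (T x) ^ p ∂(γ.map Prod.fst + γ.map Prod.snd) := by
    rw [lintegral_add_measure, lintegral_map (by fun_prop) measurable_fst,
      lintegral_map (by fun_prop) measurable_snd, ← lintegral_add_left (by fun_prop),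
      ← lintegral_const_mul _ (by fun_prop)]
    exact lintegral_mono fun z => ENNReal.rpow_add_le_mul_rpow_add_rpow _ _ hp
  calc (∫⁻ z, edist z.1 z.2 ^ p ∂γ) ^ (1 / p)
      ≤ (∫⁻ z, (edist (T z.1) (T z.2) + (edist z.1 (T z.1) + edist z.2 (T z.2))) ^ p ∂γ) ^
          (1 / p) := by
        gcongr with z
        exact htri z
    _ ≤ (∫⁻ z, edist (T z.1) (T z.2) ^ p ∂γ) ^ (1 / p) +
          (∫⁻ z, (edist z.1 (T z.1) + edist z.2 (T z.2)) ^ p ∂γ) ^ (1 / p) :=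
        ENNReal.lintegral_Lp_add_le (by fun_prop) (by fun_prop) hp
    _ ≤ _ := by
        rw [lintegral_map (by fun_prop) (by fun_prop)]
        gcongr
        exact le_rfl

theorem Wp_measure_sub_le [BorelSpace E] [SecondCountableTopology E] [StandardBorelSpace E]
    [Nonempty E] (hp : 1 ≤ p) {T : E → E} (hT : Measurable T) (μ ν : Measure E)
    [IsFiniteMeasure μ] [IsFiniteMeasure ν] :
    Wp p (μ - ν) (ν - μ) ≤ Wp p (μ.map T - ν.map T) (ν.map T - μ.map T) +
      (2 ^ (p - 1) * ∫⁻ x, edist x (T x) ^ p ∂(μ - ν + (ν - μ))) ^ (1 / p) := by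
  have hp₀ : 0 < p := by linarith
  obtain ⟨δ, hδμ, hδν⟩ : ∃ δ, (μ - ν).map T = μ.map T - ν.map T + δ ∧
      (ν - μ).map T = ν.map T - μ.map T + δ := by
    apply exists_eq_measure_sub_add
    rw [← Measure.map_add _ _ hT, ← Measure.map_add _ _ hT, measure_sub_add_eq_sub_add]
  rw [← tsub_le_iff_right]
  refine le_iInf₂ fun κ hκ => tsub_le_iff_right.2 ?_
  obtain ⟨γ, hγμ, hγν, hγT⟩ : ∃ γ : Measure (E × E), γ.map Prod.fst = μ - ν ∧
      γ.map Prod.snd = ν - μ ∧ γ.map (Prod.map T T) = κ + δ.map fun u => (u, u) := by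
    apply exists_map_prodMap_eq hT hT
    · rw [Measure.map_add _ _ measurable_fst, hκ.1, hδμ,
        Measure.map_map (by fun_prop) (by fun_prop)]
      exact congrArg (_ + ·) Measure.map_id
    · rw [Measure.map_add _ _ measurable_snd, hκ.2, hδν,
        Measure.map_map (by fun_prop) (by fun_prop)]
      exact congrArg (_ + ·) Measure.map_id
  have hdiag : ∫⁻ z, edist z.1 z.2 ^ p ∂(δ.map fun u => (u, u)) = 0 := by
    rw [lintegral_map (by fun_prop) (by fun_prop)]
    simp [hp₀]
  calc Wp p (μ - ν) (ν - μ) ≤ (∫⁻ z, edist z.1 z.2 ^ p ∂γ) ^ (1 / p) := by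
        simpa only [hγμ, hγν] using Wp_le_lintegral p γ
    _ ≤ _ := by
        simpa only [hγμ, hγν, hγT, lintegral_add_measure _ κ, hdiag, add_zero] using
          lintegral_edist_rpow_le_map hp hT γ

end Wasserstein

section EmpiricalMeasure

variable {E F : Type*} [MeasurableSpace E] [MeasurableSpace F]

theorem lintegral_empiricalMeasure (n : ℕ) (X : Fin n → E) {f : E → ℝ≥0∞} (hf : Measurable f) :
    ∫⁻ x, f x ∂empiricalMeasure n X = (n : ℝ≥0∞)⁻¹ * ∑ i, f (X i) := by
  simp [empiricalMeasure, lintegral_dirac' _ hf]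

theorem isProbabilityMeasure_empiricalMeasure {n : ℕ} (hn : n ≠ 0) (X : Fin n → E) :
    IsProbabilityMeasure (empiricalMeasure n X) :=
  ⟨by simp [empiricalMeasure, ENNReal.inv_mul_cancel, hn]⟩

theorem map_empiricalMeasure (n : ℕ) (X : Fin n → E) {f : E → F} (hf : Measurable f) :
    (empiricalMeasure n X).map f = empiricalMeasure n (f ∘ X) := by
  simp [empiricalMeasure, Measure.map_smul, Measure.map_finset_sum hf.aemeasurable,
    Measure.map_dirac' hf]

theorem empiricalMeasure_comp_perm {n : ℕ} (X : Fin n → E) (σ : Equiv.Perm (Fin n)) :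
    empiricalMeasure n (X ∘ σ) = empiricalMeasure n X := by
  simp only [empiricalMeasure, Function.comp_apply, Equiv.sum_comp σ fun i => Measure.dirac (X i)]

theorem empiricalMeasure_repeat {k : ℕ} (hk : k ≠ 0) {r : ℕ} (z : Fin r → E) :
    empiricalMeasure (k * r) (Fin.repeat k z) = empiricalMeasure r z := by
  have hsum : ∑ i, Measure.dirac (Fin.repeat k z i) = k • ∑ i, Measure.dirac (z i) := by
    calc ∑ i, Measure.dirac (Fin.repeat k z i)
        = ∑ q : Fin k × Fin r, Measure.dirac (z q.2) :=
          finProdFinEquiv.symm.sum_comp fun q => Measure.dirac (z q.2)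
      _ = k • ∑ i, Measure.dirac (z i) := by simp [Fintype.sum_prod_type]
  rw [empiricalMeasure, empiricalMeasure, hsum, ← Nat.cast_smul_eq_nsmul ℝ≥0∞, smul_smul,
    Nat.cast_mul, mul_comm (k : ℝ≥0∞), ENNReal.mul_inv (by simp) (by simp), mul_assoc,
    ENNReal.inv_mul_cancel (by simp [hk]) (by simp), mul_one]

theorem one_le_mul_empiricalMeasure_singleton [MeasurableSingletonClass E] {N : ℕ}
    {X : Fin N → E} {x : E} (hx : empiricalMeasure N X {x} ≠ 0) :
    1 ≤ N * empiricalMeasure N X {x} := by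
  obtain ⟨i, rfl⟩ : ∃ i, X i = x := by
    by_contra! hne
    exact hx (by simp [empiricalMeasure, hne])
  have hN : (N : ℝ≥0∞) ≠ 0 := Nat.cast_ne_zero.2 i.pos.ne'
  calc (1 : ℝ≥0∞) = Measure.dirac (X i) {X i} := by simp
    _ ≤ ∑ j, Measure.dirac (X j) {X i} :=
        Finset.single_le_sum (f := fun j => Measure.dirac (X j) {X i}) (by simp) (Finset.mem_univ i)
    _ = N * empiricalMeasure N X {X i} := by
        simp [empiricalMeasure, ENNReal.mul_inv_cancel_left hN]

instance isProbabilityMeasure_sampleMeasure (μ : Measure E) [IsProbabilityMeasure μ] (n : ℕ) :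
    IsProbabilityMeasure (sampleMeasure μ n) :=
  inferInstanceAs (IsProbabilityMeasure (Measure.pi _))

theorem map_sampleMeasure {T : E → F} (hT : Measurable T) (μ : Measure E) [IsProbabilityMeasure μ]
    (n : ℕ) : (sampleMeasure μ n).map (T ∘ ·) = sampleMeasure (μ.map T) n := by
  have : IsProbabilityMeasure (μ.map T) := Measure.isProbabilityMeasure_map hT.aemeasurable
  exact Measure.pi_map_pi fun _ => hT.aemeasurable

end EmpiricalMeasure

section Matching

theorem exists_perm_sum_le_of_mem_doublyStochastic {ι : Type*} [Fintype ι] [DecidableEq ι]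
    {M : Matrix ι ι ℝ} (hM : M ∈ doublyStochastic ℝ ι) (C : ι → ι → ℝ≥0∞) :
    ∃ σ : Equiv.Perm ι, ∑ i, C i (σ i) ≤ ∑ i, ∑ j, ENNReal.ofReal (M i j) * C i j := by
  obtain ⟨w, hw, hw₁, rfl⟩ := exists_eq_sum_perm_of_mem_doublyStochastic hM
  obtain ⟨σ, hσ⟩ := Finite.exists_min fun σ : Equiv.Perm ι => ∑ i, C i (σ i)
  have hentry (i j : ι) : ENNReal.ofReal ((∑ τ, w τ • τ.permMatrix ℝ) i j) =
      ∑ τ : Equiv.Perm ι, if τ i = j then ENNReal.ofReal (w τ) else 0 := by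
    calc ENNReal.ofReal ((∑ τ, w τ • τ.permMatrix ℝ) i j)
        = ENNReal.ofReal (∑ τ : Equiv.Perm ι, if τ i = j then w τ else 0) := by
          simp [Matrix.sum_apply, PEquiv.toMatrix_apply]
      _ = ∑ τ : Equiv.Perm ι, if τ i = j then ENNReal.ofReal (w τ) else 0 := by
          rw [ENNReal.ofReal_sum_of_nonneg fun τ _ => by split_ifs <;> simp [hw]]
          simp only [apply_ite ENNReal.ofReal, ENNReal.ofReal_zero]
  refine ⟨σ, ?_⟩
  calc ∑ i, C i (σ i) = ∑ τ, ENNReal.ofReal (w τ) * ∑ i, C i (σ i) := by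
        rw [← Finset.sum_mul, ← ENNReal.ofReal_sum_of_nonneg fun τ _ => hw τ, hw₁,
          ENNReal.ofReal_one, one_mul]
    _ ≤ ∑ τ, ENNReal.ofReal (w τ) * ∑ i, C i (τ i) :=
        Finset.sum_le_sum fun τ _ => mul_le_mul_right (hσ τ) _
    _ = ∑ i, ∑ τ, ENNReal.ofReal (w τ) * C i (τ i) := by
        simp only [Finset.mul_sum]
        exact Finset.sum_comm
    _ = ∑ i, ∑ j, ENNReal.ofReal ((∑ τ, w τ • τ.permMatrix ℝ) i j) * C i j := by
        refine Finset.sum_congr rfl fun i _ => ?_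
        simp only [hentry, Finset.sum_mul]
        rw [Finset.sum_comm]
        simp

variable {E F : Type*} [MeasurableSpace E] [MeasurableSpace F]

theorem measureReal_map_fst_singleton [Fintype F] [MeasurableSingletonClass E]
    [MeasurableSingletonClass F] (γ : Measure (E × F)) [IsFiniteMeasure γ] (x : E) :
    (γ.map Prod.fst).real {x} = ∑ y, γ.real {(x, y)} := by
  have hpre : (Prod.fst ⁻¹' {x} : Set (E × F)) =
      (({x} ×ˢ .univ : Finset (E × F)) : Set (E × F)) := by
    ext ⟨a, b⟩
    simp [eq_comm]
  rw [map_measureReal_apply measurable_fst (measurableSet_singleton x), hpre,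
    ← sum_measureReal_singleton, Finset.sum_product, Finset.sum_singleton]

theorem measureReal_map_snd_singleton [Fintype E] [MeasurableSingletonClass E]
    [MeasurableSingletonClass F] (γ : Measure (E × F)) [IsFiniteMeasure γ] (y : F) :
    (γ.map Prod.snd).real {y} = ∑ x, γ.real {(x, y)} := by
  have hpre : (Prod.snd ⁻¹' {y} : Set (E × F)) =
      ((.univ ×ˢ {y} : Finset (E × F)) : Set (E × F)) := by
    ext ⟨a, b⟩
    simp [eq_comm]
  rw [map_measureReal_apply measurable_snd (measurableSet_singleton y), hpre,
    ← sum_measureReal_singleton, Finset.sum_product]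
  simp only [Finset.sum_singleton]

theorem mem_doublyStochastic_of_map_eq_empiricalMeasure {N : ℕ} (hN : N ≠ 0)
    {γ : Measure (Fin N × Fin N)} (hfst : γ.map Prod.fst = empiricalMeasure N id)
    (hsnd : γ.map Prod.snd = empiricalMeasure N id) :
    (Matrix.of fun i j => N * γ.real {(i, j)}) ∈ doublyStochastic ℝ (Fin N) := by
  have hprob := isProbabilityMeasure_empiricalMeasure hN (id : Fin N → Fin N)
  have : IsFiniteMeasure (γ.map Prod.fst) := hfst ▸ inferInstance
  have : IsFiniteMeasure γ := Measure.isFiniteMeasure_of_map measurable_fst.aemeasurable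
  have hunif (i : Fin N) : (empiricalMeasure N id).real {i} = (N : ℝ)⁻¹ := by
    simp [empiricalMeasure, Measure.real, Set.indicator_apply]
  have hN' : (N : ℝ) ≠ 0 := Nat.cast_ne_zero.2 hN
  refine mem_doublyStochastic_iff_sum.2
    ⟨fun i j => mul_nonneg N.cast_nonneg measureReal_nonneg, fun i => ?_, fun j => ?_⟩
  · simp only [Matrix.of_apply, ← Finset.mul_sum]
    rw [← measureReal_map_fst_singleton, hfst, hunif, mul_inv_cancel₀ hN']
  · simp only [Matrix.of_apply, ← Finset.mul_sum]
    rw [← measureReal_map_snd_singleton, hsnd, hunif, mul_inv_cancel₀ hN']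

theorem exists_perm_sum_le_lintegral [MeasurableEq E] [MeasurableEq F] {N : ℕ} (hN : N ≠ 0)
    {x : Fin N → E} {y : Fin N → F} {κ : Measure (E × F)}
    (hfst : κ.map Prod.fst = empiricalMeasure N x) (hsnd : κ.map Prod.snd = empiricalMeasure N y)
    {c : E × F → ℝ≥0∞} (hc : Measurable c) :
    ∃ σ : Equiv.Perm (Fin N), (N : ℝ≥0∞)⁻¹ * ∑ i, c (x i, y (σ i)) ≤ ∫⁻ q, c q ∂κ := by
  have : NeZero N := ⟨hN⟩
  have hprob := isProbabilityMeasure_empiricalMeasure hN (id : Fin N → Fin N)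
  obtain ⟨γ, hγfst, hγsnd, hγκ⟩ : ∃ γ : Measure (Fin N × Fin N),
      γ.map Prod.fst = empiricalMeasure N id ∧ γ.map Prod.snd = empiricalMeasure N id ∧
        γ.map (Prod.map x y) = κ := by
    apply exists_map_prodMap_eq (by fun_prop) (by fun_prop)
    · rw [hfst, map_empiricalMeasure _ _ (by fun_prop), Function.comp_id]
    · rw [hsnd, map_empiricalMeasure _ _ (by fun_prop), Function.comp_id]
  have : IsFiniteMeasure (γ.map Prod.fst) := hγfst ▸ inferInstance
  have : IsFiniteMeasure γ := Measure.isFiniteMeasure_of_map measurable_fst.aemeasurable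
  obtain ⟨σ, hσ⟩ := exists_perm_sum_le_of_mem_doublyStochastic
    (mem_doublyStochastic_of_map_eq_empiricalMeasure hN hγfst hγsnd) fun i j => c (x i, y j)
  refine ⟨σ, ?_⟩
  calc (N : ℝ≥0∞)⁻¹ * ∑ i, c (x i, y (σ i))
      ≤ (N : ℝ≥0∞)⁻¹ * ∑ i, ∑ j, ENNReal.ofReal (N * γ.real {(i, j)}) * c (x i, y j) := by
        gcongr _ * ?_
        exact hσ
    _ = ∑ i, ∑ j, c (x i, y j) * γ {(i, j)} := by
        simp only [Finset.mul_sum]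
        refine Finset.sum_congr rfl fun i _ => Finset.sum_congr rfl fun j _ => ?_
        rw [ENNReal.ofReal_mul N.cast_nonneg, ENNReal.ofReal_natCast, ofReal_measureReal,
          ← mul_assoc, ENNReal.inv_mul_cancel_left (by simpa) (by simp), mul_comm]
    _ = ∫⁻ q, c q ∂κ := by
        rw [← hγκ, lintegral_map hc (by fun_prop), lintegral_fintype, Fintype.sum_prod_type]
        rfl

theorem exists_map_empiricalMeasure_eq_lintegral_edist_rpow_le {E : Type*} [MetricSpace E]
    [MeasurableSpace E] [OpensMeasurableSpace E] [SecondCountableTopology E] {N : ℕ} (hN : N ≠ 0)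
    {y : Fin N → E} (hy : Function.Injective y) (w : Fin N → E) {p : ℝ} (hp : 0 ≤ p) :
    ∃ T : E → E, Measurable T ∧ (empiricalMeasure N y).map T = empiricalMeasure N w ∧
      (∫⁻ x, edist x (T x) ^ p ∂empiricalMeasure N y) ^ (1 / p) ≤
        Wp p (empiricalMeasure N y) (empiricalMeasure N w) := by
  obtain ⟨σ, hσ⟩ := Finite.exists_min fun σ : Equiv.Perm (Fin N) => ∑ i, edist (y i) (w (σ i)) ^ p
  let T := Function.extend y (w ∘ σ) id
  have hTy (i : Fin N) : T (y i) = w (σ i) := hy.extend_apply _ _ i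
  have hT : Measurable T := by
    refine measurable_id.measurable_of_countable_ne ((Set.countable_range y).mono fun x hx => ?_)
    by_contra hxy
    exact hx (Function.extend_apply' _ id x hxy).symm
  refine ⟨T, hT, ?_, le_iInf₂ fun κ hκ => ?_⟩
  · rw [map_empiricalMeasure N y hT, ← empiricalMeasure_comp_perm w σ]
    exact congrArg _ (funext hTy)
  · obtain ⟨τ, hτ⟩ := exists_perm_sum_le_lintegral hN hκ.1 hκ.2
      (c := fun q => edist q.1 q.2 ^ p) (by fun_prop)
    rw [lintegral_empiricalMeasure N y (by fun_prop)]
    simp only [hTy]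
    gcongr
    refine le_trans ?_ hτ
    gcongr _ * ?_
    exact hσ τ

end Matching

section Deviation

theorem lintegral_enorm_sub_integral_le_sqrt_variance {Ω : Type*} [MeasurableSpace Ω]
    {P : Measure Ω} [IsProbabilityMeasure P] {X : Ω → ℝ} (hX : MemLp X 2 P) :
    ∫⁻ ω, ‖X ω - P[X]‖ₑ ∂P ≤ ENNReal.ofReal √(Var[X; P]) := by
  have hXm : AEStronglyMeasurable (fun ω => X ω - P[X]) P :=
    hX.aestronglyMeasurable.sub aestronglyMeasurable_const
  calc ∫⁻ ω, ‖X ω - P[X]‖ₑ ∂P = eLpNorm (fun ω => X ω - P[X]) 1 P :=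
        eLpNorm_one_eq_lintegral_enorm.symm
    _ ≤ eLpNorm (fun ω => X ω - P[X]) 2 P :=
        eLpNorm_le_eLpNorm_of_exponent_le one_le_two hXm
    _ = evariance X P ^ (1 / 2 : ℝ) := by
        rw [eLpNorm_eq_lintegral_rpow_enorm_toReal two_ne_zero ENNReal.ofNat_ne_top]
        simp [evariance]
    _ = ENNReal.ofReal √(Var[X; P]) := by
        rw [← hX.ofReal_variance_eq, ENNReal.ofReal_rpow_of_nonneg (variance_nonneg X P) (by simp),
          Real.sqrt_eq_rpow]

variable {E : Type*} [MeasurableSpace E]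

theorem lintegral_enorm_sampleMean_sub_integral_le {μ : Measure E} [IsProbabilityMeasure μ] {n : ℕ}
    (hn : n ≠ 0) {f : E → ℝ} (hf : MemLp f 2 μ) :
    ∫⁻ X, ‖(n : ℝ)⁻¹ * ∑ i, f (X i) - μ[f]‖ₑ ∂sampleMeasure μ n ≤
      ENNReal.ofReal √(Var[f; μ] / n) := by
  have hn' : (n : ℝ) ≠ 0 := Nat.cast_ne_zero.2 hn
  have hfi (i : Fin n) : MemLp (fun X : Fin n → E => f (X i)) 2 (sampleMeasure μ n) :=
    hf.comp_measurePreserving (measurePreserving_eval (fun _ => μ) i)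
  have hmean : ∫ X, (n : ℝ)⁻¹ * ∑ i, f (X i) ∂sampleMeasure μ n = μ[f] := by
    have heval (i : Fin n) : ∫ X, f (X i) ∂sampleMeasure μ n = μ[f] :=
      integral_comp_eval (μ := fun _ => μ) hf.aestronglyMeasurable
    rw [integral_const_mul, integral_finsetSum _ fun i _ => (hfi i).integrable one_le_two]
    simp [heval, hn']
  have hvar : Var[fun X => (n : ℝ)⁻¹ * ∑ i, f (X i); sampleMeasure μ n] = Var[f; μ] / n := by
    have hsum : Var[∑ i, fun X : Fin n → E => f (X i); sampleMeasure μ n] = n * Var[f; μ] := by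
      simpa [sampleMeasure] using variance_sum_pi (μ := fun _ : Fin n => μ) fun _ => hf
    rw [variance_const_mul, ← Finset.sum_fn, hsum]
    field_simp
  have hL2 : MemLp (fun X => (n : ℝ)⁻¹ * ∑ i, f (X i)) 2 (sampleMeasure μ n) :=
    (memLp_finsetSum _ fun i _ => hfi i).const_mul _
  simpa only [hmean, hvar] using lintegral_enorm_sub_integral_le_sqrt_variance hL2

theorem measureReal_empiricalMeasure (n : ℕ) (X : Fin n → E) {s : Set E} (hs : MeasurableSet s) :
    (empiricalMeasure n X).real s = (n : ℝ)⁻¹ * ∑ i, s.indicator 1 (X i) := by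
  have hterm (i : Fin n) : ((s.indicator 1 (X i) : ℝ≥0∞)).toReal = s.indicator 1 (X i) := by
    by_cases hi : X i ∈ s <;> simp [hi]
  have hne (i : Fin n) : (s.indicator 1 (X i) : ℝ≥0∞) ≠ ∞ := by
    by_cases hi : X i ∈ s <;> simp [hi]
  simp [empiricalMeasure, Measure.real, hs, ENNReal.toReal_sum, hne, hterm]

theorem variance_indicator_one_le (μ : Measure E) [IsProbabilityMeasure μ] {s : Set E}
    (hs : MeasurableSet s) : Var[s.indicator 1; μ] ≤ μ.real s := by
  have hsq : (s.indicator 1 : E → ℝ) ^ 2 = s.indicator 1 := by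
    ext x
    by_cases hx : x ∈ s <;> simp [hx]
  refine (variance_le_expectation_sq (by fun_prop (disch := exact hs))).trans_eq ?_
  rw [hsq, integral_indicator_one hs]

theorem lintegral_enorm_empiricalMeasure_sub_le (μ : Measure E) [IsProbabilityMeasure μ] {n : ℕ}
    (hn : n ≠ 0) {s : Set E} (hs : MeasurableSet s) :
    ∫⁻ X, ‖(empiricalMeasure n X).real s - μ.real s‖ₑ ∂sampleMeasure μ n ≤
      ENNReal.ofReal √(μ.real s / n) := by
  have hL2 : MemLp (s.indicator 1 : E → ℝ) 2 μ :=
    memLp_indicator_const 2 hs 1 (Or.inr (measure_ne_top μ s))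
  calc ∫⁻ X, ‖(empiricalMeasure n X).real s - μ.real s‖ₑ ∂sampleMeasure μ n
      = ∫⁻ X, ‖(n : ℝ)⁻¹ * ∑ i, s.indicator 1 (X i) - μ[s.indicator 1]‖ₑ ∂sampleMeasure μ n := by
        simp only [measureReal_empiricalMeasure n _ hs, integral_indicator_one hs]
    _ ≤ ENNReal.ofReal √(Var[s.indicator 1; μ] / n) :=
        lintegral_enorm_sampleMean_sub_integral_le hn hL2
    _ ≤ ENNReal.ofReal √(μ.real s / n) := by
        gcongr
        exact variance_indicator_one_le μ hs

theorem measure_sub_add_sub_singleton [MeasurableSingletonClass E] (μ ν : Measure E)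
    [IsFiniteMeasure μ] [IsFiniteMeasure ν] (x : E) :
    (μ - ν + (ν - μ)) {x} = ‖μ.real {x} - ν.real {x}‖ₑ := by
  rw [Measure.add_apply, measure_sub_apply_singleton, measure_sub_apply_singleton,
    ← ofReal_measureReal, ← ofReal_measureReal, ← ENNReal.ofReal_sub _ measureReal_nonneg,
    ← ENNReal.ofReal_sub _ measureReal_nonneg]
  rcases le_total (μ.real {x}) (ν.real {x}) with h | h
  · rw [ENNReal.ofReal_of_nonpos (sub_nonpos.2 h), zero_add, enorm_sub_rev,
      Real.enorm_of_nonneg (sub_nonneg.2 h)]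
  · rw [ENNReal.ofReal_of_nonpos (sub_nonpos.2 h), add_zero, Real.enorm_of_nonneg (sub_nonneg.2 h)]

theorem lintegral_empiricalMeasure_sub_singleton_le [MeasurableSingletonClass E] {μ : Measure E}
    [IsProbabilityMeasure μ] {n : ℕ} (hn : n ≠ 0) {K : ℝ≥0} {x : E}
    (hK : μ {x} ≠ 0 → 1 ≤ K * μ {x}) :
    ∫⁻ X, (empiricalMeasure n X - μ + (μ - empiricalMeasure n X)) {x} ∂sampleMeasure μ n ≤
      ENNReal.ofReal √(K / n) * μ {x} := by
  have hprob (X : Fin n → E) := isProbabilityMeasure_empiricalMeasure hn X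
  simp only [measure_sub_add_sub_singleton]
  refine (lintegral_enorm_empiricalMeasure_sub_le μ hn (measurableSet_singleton x)).trans ?_
  have hle : μ.real {x} ≤ K * μ.real {x} ^ 2 := by
    rcases eq_or_ne (μ {x}) 0 with h0 | h0
    · simp [Measure.real, h0]
    · have h1 : 1 ≤ K * μ.real {x} := by
        simpa [Measure.real] using ENNReal.toReal_mono (by finiteness) (hK h0)
      nlinarith [measureReal_nonneg (μ := μ) (s := {x})]
  calc ENNReal.ofReal √(μ.real {x} / n) ≤ ENNReal.ofReal √(K / n * μ.real {x} ^ 2) := by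
        rw [div_mul_eq_mul_div]
        gcongr
    _ = ENNReal.ofReal √(K / n) * μ {x} := by
        rw [Real.sqrt_mul (by positivity), Real.sqrt_sq measureReal_nonneg,
          ENNReal.ofReal_mul (by positivity), ofReal_measureReal]

theorem lintegral_lintegral_empiricalMeasure_sub_le [Finite E] [MeasurableSingletonClass E]
    {μ : Measure E} [IsProbabilityMeasure μ] {n : ℕ} (hn : n ≠ 0) {K : ℝ≥0}
    (hK : ∀ x, μ {x} ≠ 0 → 1 ≤ K * μ {x}) (f : E → ℝ≥0∞) :
    ∫⁻ X, ∫⁻ x, f x ∂(empiricalMeasure n X - μ + (μ - empiricalMeasure n X)) ∂sampleMeasure μ n ≤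
      ENNReal.ofReal √(K / n) * ∫⁻ x, f x ∂μ := by
  have := Fintype.ofFinite E
  calc _ = ∫⁻ X, ∑ x, f x * (empiricalMeasure n X - μ + (μ - empiricalMeasure n X)) {x}
          ∂sampleMeasure μ n := by simp only [lintegral_fintype f]
    _ = ∑ x, f x * ∫⁻ X, (empiricalMeasure n X - μ + (μ - empiricalMeasure n X)) {x}
          ∂sampleMeasure μ n := by
        rw [lintegral_finsetSum _ fun x _ => measurable_of_finite _]
        simp only [lintegral_const_mul _ (measurable_of_finite _)]
    _ ≤ ∑ x, f x * (ENNReal.ofReal √(K / n) * μ {x}) := by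
        gcongr with x
        exact lintegral_empiricalMeasure_sub_singleton_le hn (hK x)
    _ = ENNReal.ofReal √(K / n) * ∫⁻ x, f x ∂μ := by
        simp only [lintegral_fintype f, Finset.mul_sum, mul_left_comm]

end Deviation

section FiniteSpace

variable {p : ℝ}

theorem two_rpow_mul_ofReal_sqrt_rpow (hp : 0 < p) {a : ℝ} (ha : 0 ≤ a) :
    ((2 : ℝ≥0∞) ^ (p - 1) * ENNReal.ofReal √a) ^ (1 / p) =
      ENNReal.ofReal (2 ^ (1 - 1 / p) * a ^ (1 / (2 * p))) := by
  have htwo : (2 : ℝ≥0∞) ^ (p - 1) = ENNReal.ofReal (2 ^ (p - 1)) := by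
    rw [← ENNReal.ofReal_rpow_of_pos two_pos, ENNReal.ofReal_ofNat]
  rw [htwo, ← ENNReal.ofReal_mul (by positivity),
    ENNReal.ofReal_rpow_of_nonneg (by positivity) (by positivity),
    Real.mul_rpow (by positivity) (by positivity), ← Real.rpow_mul two_pos.le,
    Real.sqrt_eq_rpow, ← Real.rpow_mul ha]
  congr 3 <;> field_simp

variable {E : Type*} [MetricSpace E] [Fintype E] [MeasurableSpace E]

/-- The `L^p` norm `(𝔼[W_p^$(μ_n, μ)^p])^{1/p}`, where `μ_n` is the empirical measure of `μ` with
sample size `n`: the analogue of `expWpPow` for `W_p^$`. -/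
noncomputable def expWpDollarPow (p : ℝ) (μ : Measure E) (n : ℕ) : ℝ≥0∞ :=
  (∫⁻ X, WpDollar p (empiricalMeasure n X) μ ^ p ∂sampleMeasure μ n) ^ (1 / p)

variable [BorelSpace E]

theorem WpDollar_le_WpDollar_map_add (hp : 1 ≤ p) (T : E → E) (μ ν : Measure E)
    [IsProbabilityMeasure μ] [IsProbabilityMeasure ν] :
    WpDollar p μ ν ≤ WpDollar p (μ.map T) (ν.map T) +
      (2 ^ (p - 1) * ∫⁻ x, edist x (T x) ^ p ∂(μ - ν + (ν - μ))) ^ (1 / p) := by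
  have hT : Measurable T := measurable_of_finite T
  have : Nonempty E := nonempty_of_isProbabilityMeasure μ
  have : IsProbabilityMeasure (μ.map T) := Measure.isProbabilityMeasure_map hT.aemeasurable
  have : IsProbabilityMeasure (ν.map T) := Measure.isProbabilityMeasure_map hT.aemeasurable
  rw [WpDollar_eq_Wp_sub (by linarith), WpDollar_eq_Wp_sub (by linarith)]
  exact Wp_measure_sub_le hp hT μ ν

theorem lintegral_WpDollar_map (p : ℝ) (T : E → E) (μ : Measure E) [IsProbabilityMeasure μ]
    (n : ℕ) :
    ∫⁻ X, WpDollar p ((empiricalMeasure n X).map T) (μ.map T) ^ p ∂sampleMeasure μ n =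
      ∫⁻ X, WpDollar p (empiricalMeasure n X) (μ.map T) ^ p ∂sampleMeasure (μ.map T) n := by
  have hT : Measurable T := measurable_of_finite T
  simp only [← map_sampleMeasure hT, map_empiricalMeasure n _ hT]
  rw [lintegral_map (measurable_of_finite _) (measurable_of_finite _)]

theorem expWpDollarPow_le_map_add (hp : 1 ≤ p) {n : ℕ} (hn : n ≠ 0) {K : ℝ≥0} {μ : Measure E}
    [IsProbabilityMeasure μ] (hK : ∀ x, μ {x} ≠ 0 → 1 ≤ K * μ {x}) (T : E → E) :
    expWpDollarPow p μ n ≤ expWpDollarPow p (μ.map T) n +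
      ENNReal.ofReal (2 ^ (1 - 1 / p) * (K / n) ^ (1 / (2 * p))) *
        (∫⁻ x, edist x (T x) ^ p ∂μ) ^ (1 / p) := by
  have hp₀ : 0 < p := by linarith
  have hprob (X : Fin n → E) := isProbabilityMeasure_empiricalMeasure hn X
  let D (X : Fin n → E) : ℝ≥0∞ :=
    2 ^ (p - 1) * ∫⁻ x, edist x (T x) ^ p ∂(empiricalMeasure n X - μ + (μ - empiricalMeasure n X))
  have hD : ∫⁻ X, D X ∂sampleMeasure μ n ≤
      2 ^ (p - 1) * (ENNReal.ofReal √(K / n) * ∫⁻ x, edist x (T x) ^ p ∂μ) := by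
    rw [lintegral_const_mul _ (measurable_of_finite _)]
    gcongr
    exact lintegral_lintegral_empiricalMeasure_sub_le hn hK _
  calc expWpDollarPow p μ n
      ≤ (∫⁻ X, (WpDollar p ((empiricalMeasure n X).map T) (μ.map T) + D X ^ (1 / p)) ^ p
          ∂sampleMeasure μ n) ^ (1 / p) := by
        unfold expWpDollarPow
        gcongr with X
        exact WpDollar_le_WpDollar_map_add hp T _ _
    _ ≤ (∫⁻ X, WpDollar p ((empiricalMeasure n X).map T) (μ.map T) ^ p ∂sampleMeasure μ n) ^
          (1 / p) + (∫⁻ X, (D X ^ (1 / p)) ^ p ∂sampleMeasure μ n) ^ (1 / p) :=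
        ENNReal.lintegral_Lp_add_le (measurable_of_finite _).aemeasurable
          (measurable_of_finite _).aemeasurable hp
    _ = expWpDollarPow p (μ.map T) n + (∫⁻ X, D X ∂sampleMeasure μ n) ^ (1 / p) := by
        simp only [lintegral_WpDollar_map, expWpDollarPow, one_div,
          ENNReal.rpow_inv_rpow hp₀.ne']
    _ ≤ expWpDollarPow p (μ.map T) n +
          (2 ^ (p - 1) * (ENNReal.ofReal √(K / n) * ∫⁻ x, edist x (T x) ^ p ∂μ)) ^ (1 / p) := by
        gcongr
    _ = _ := by
        rw [← mul_assoc, ENNReal.mul_rpow_of_nonneg _ _ (by positivity),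
          two_rpow_mul_ofReal_sqrt_rpow hp₀ (by positivity)]

theorem stmt_15_general (hp : 1 ≤ p) {k r n : ℕ} (hk : k ≠ 0) (hr : r ≠ 0) (hn : n ≠ 0)
    {y : Fin (k * r) → E} (hy : Function.Injective y) (z : Fin r → E) :
    expWpDollarPow p (empiricalMeasure (k * r) y) n ≤ expWpDollarPow p (empiricalMeasure r z) n +
      ENNReal.ofReal (2 ^ (1 - 1 / p) * (k * r / n) ^ (1 / (2 * p))) *
        Wp p (empiricalMeasure (k * r) y) (empiricalMeasure r z) := by
  have hkr : k * r ≠ 0 := mul_ne_zero hk hr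
  have := isProbabilityMeasure_empiricalMeasure hkr y
  obtain ⟨T, -, hTz, hTy⟩ := exists_map_empiricalMeasure_eq_lintegral_edist_rpow_le hkr hy
    (Fin.repeat k z) (p := p) (by linarith)
  rw [empiricalMeasure_repeat hk] at hTz hTy
  have hK (x : E) (hx : empiricalMeasure (k * r) y {x} ≠ 0) :
      1 ≤ ((k * r : ℝ≥0) : ℝ≥0∞) * empiricalMeasure (k * r) y {x} := by
    simpa using one_le_mul_empiricalMeasure_singleton hx
  have hbound := expWpDollarPow_le_map_add hp hn hK T
  rw [hTz] at hbound
  push_cast at hbound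
  exact hbound.trans (by gcongr)

end FiniteSpace

/-- **Lemma (chainingwp).** Let `(E, d_E)` be a finite metric space, `p ≥ 1`,
`y₁, …, y_{2r} ∈ E` distinct and `z₁, …, z_r ∈ E`. Let `μ = (1/(2r)) ∑ δ_{y_i}` and
`μ̃ = (1/r) ∑ δ_{z_i}`, with empirical measures `μ_n`, `μ̃_n` of sample size `n`. Then
`‖W_p^$(μ_n, μ)‖_{L^p} ≤ ‖W_p^$(μ̃_n, μ̃)‖_{L^p} + 2^{1−1/p} (2r/n)^{1/(2p)} W_p(μ, μ̃)`. -/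
theorem stmt_15 {E : Type*} [MetricSpace E] [Fintype E]
    [MeasurableSpace E] [BorelSpace E]
    (p : ℝ) (hp : 1 ≤ p) (r n : ℕ) (hr : 1 ≤ r) (hn : 1 ≤ n)
    (y : Fin (2 * r) → E) (hy : Function.Injective y) (z : Fin r → E) :
    (∫⁻ X, (WpDollar p (empiricalMeasure n X) (empiricalMeasure (2 * r) y)) ^ p
        ∂(sampleMeasure (empiricalMeasure (2 * r) y) n)) ^ (1 / p) ≤
      (∫⁻ X, (WpDollar p (empiricalMeasure n X) (empiricalMeasure r z)) ^ p
          ∂(sampleMeasure (empiricalMeasure r z) n)) ^ (1 / p) +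
        ENNReal.ofReal
            ((2 : ℝ) ^ (1 - 1 / p) * ((2 * (r : ℝ) / n) ^ (1 / (2 * p)))) *
          Wp p (empiricalMeasure (2 * r) y) (empiricalMeasure r z) :=
  mod_cast stmt_15_general hp two_ne_zero (by lia) (by lia) hy z
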